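/- arXiv:0809.1141 — 3 statements merged into one kernel-verified Lean document; each statement's English description precedes it below -/
import Mathlib

section
/- Let $n \in \mathbb{N}$, $p \in [0,1]$, and let $X$ be a binomial random variable with parameters $n$ and $p$ (i.e., $X$ has the distribution $\mathrm{Bin}(n,p)$). Then for every real number $k$ with $k \geq np$ and $k > 0$, the upper tail satisfies $P[X \geq k] \leq (np/k)^k \exp(k - np)$. -/
/-! For weights `w i ≥ 0` and `t ≥ 1`, comparing the indicator of `k ≤ X i` with `t ^ (X i - k)`
bounds the tail by `t ^ (-k)` times the generating function at `t`. The generating function of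
`Bin(n, p)` is `(p * t + (1 - p)) ^ n`, which is at most its Poisson counterpart
`exp (n * p * (t - 1))`. The choice `t = k / (n * p)` is optimal; when `n * p = 0` it degenerates to
the limit `t → ∞`. -/

open Filter

theorem sum_ite_le_rpow_neg_mul_sum_mul_rpow {ι : Type*} {s : Finset ι} {w X : ι → ℝ} {k t : ℝ}
    (hw : ∀ i ∈ s, 0 ≤ w i) (ht : 1 ≤ t) :
    (∑ i ∈ s, if k ≤ X i then w i else 0) ≤ t ^ (-k) * ∑ i ∈ s, w i * t ^ X i := by
  have ht0 : 0 < t := zero_lt_one.trans_le ht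
  rw [Finset.mul_sum]
  refine Finset.sum_le_sum fun i hi => ?_
  have hwi := hw i hi
  split_ifs with hk
  · have one_le : 1 ≤ t ^ (X i - k) := Real.one_le_rpow ht (sub_nonneg.mpr hk)
    calc w i ≤ w i * t ^ (X i - k) := le_mul_of_one_le_right hwi one_le
      _ = t ^ (-k) * (w i * t ^ X i) := by rw [sub_eq_neg_add, Real.rpow_add ht0]; ring
  · positivity

theorem le_div_rpow_mul_exp_sub_of_forall_le {a μ k : ℝ} (hμ : 0 ≤ μ) (hμk : μ ≤ k) (hk : 0 < k)
    (h : ∀ t, 1 ≤ t → a ≤ t ^ (-k) * Real.exp (μ * (t - 1))) :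
    a ≤ (μ / k) ^ k * Real.exp (k - μ) := by
  rcases hμ.eq_or_lt with rfl | hμ
  · have a_nonpos : a ≤ 0 := by
      refine ge_of_tendsto (tendsto_rpow_neg_atTop hk) ?_
      filter_upwards [eventually_ge_atTop 1] with t ht
      simpa using h t ht
    exact a_nonpos.trans (by positivity)
  · have rpow_eq : (k / μ) ^ (-k) = (μ / k) ^ k := by
      rw [Real.rpow_neg (by positivity), ← Real.inv_rpow (by positivity), inv_div]
    have exponent_eq : μ * (k / μ - 1) = k - μ := by field_simp
    simpa only [rpow_eq, exponent_eq] using h (k / μ) ((one_le_div hμ).mpr hμk)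

theorem sum_choose_mul_pow_mul_pow_mul_pow {R : Type*} [CommSemiring R] (x y t : R) (n : ℕ) :
    ∑ j ∈ Finset.range (n + 1), (n.choose j : R) * x ^ j * y ^ (n - j) * t ^ j
      = (x * t + y) ^ n := by
  rw [add_pow]
  refine Finset.sum_congr rfl fun j _ => ?_
  rw [mul_pow]
  ring

theorem pow_le_exp_nat_mul {x y : ℝ} (hx : 0 ≤ x) (hxy : x ≤ y + 1) (n : ℕ) :
    x ^ n ≤ Real.exp (n * y) := by
  rw [Real.exp_nat_mul]
  exact pow_le_pow_left₀ hx (hxy.trans (Real.add_one_le_exp y)) n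

theorem sum_binomial_mul_pow_le_exp {p t : ℝ} (hp0 : 0 ≤ p) (hp1 : p ≤ 1) (ht : 0 ≤ t) (n : ℕ) :
    ∑ j ∈ Finset.range (n + 1), (n.choose j : ℝ) * p ^ j * (1 - p) ^ (n - j) * t ^ j
      ≤ Real.exp (n * p * (t - 1)) := by
  have base_nonneg : 0 ≤ p * t + (1 - p) := add_nonneg (mul_nonneg hp0 ht) (sub_nonneg.mpr hp1)
  have base_eq : p * t + (1 - p) = p * (t - 1) + 1 := by ring
  rw [sum_choose_mul_pow_mul_pow_mul_pow, mul_assoc]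
  exact pow_le_exp_nat_mul base_nonneg base_eq.le n

/-- Chernoff-type upper-tail bound for the binomial distribution `Bin(n, p)`:
for real `k` with `k ≥ n p` and `k > 0`, `P[X ≥ k] ≤ (np/k)^k exp(k - np)`. -/
theorem stmt_0 (n : ℕ) (p : ℝ) (hp0 : 0 ≤ p) (hp1 : p ≤ 1) (k : ℝ)
    (hknp : (n : ℝ) * p ≤ k) (hk0 : 0 < k) :
    (∑ j ∈ Finset.range (n + 1),
        if k ≤ (j : ℝ) then (n.choose j : ℝ) * p ^ j * (1 - p) ^ (n - j) else 0)
      ≤ ((n : ℝ) * p / k) ^ k * Real.exp (k - (n : ℝ) * p) := by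
  have weight_nonneg (j : ℕ) : 0 ≤ (n.choose j : ℝ) * p ^ j * (1 - p) ^ (n - j) :=
    mul_nonneg (by positivity) (pow_nonneg (sub_nonneg.mpr hp1) _)
  refine le_div_rpow_mul_exp_sub_of_forall_le (by positivity) hknp hk0 fun t ht => ?_
  have ht0 : 0 ≤ t := zero_le_one.trans ht
  refine (sum_ite_le_rpow_neg_mul_sum_mul_rpow (fun j _ => weight_nonneg j) ht).trans ?_
  simp only [Real.rpow_natCast]
  gcongr
  exact sum_binomial_mul_pow_le_exp hp0 hp1 ht0 n
end

section
/- Let $n \in \mathbb{N}$, $p \in [0,1]$, and let $X$ be a binomial random variable with parameters $n$ and $p$ (i.e., $X$ has the distribution $\mathrm{Bin}(n,p)$). Then for every real number $k$ with $0 < k \leq np$, the lower tail satisfies $P[X \leq k] \leq (np/k)^k \exp(k - np)$. -/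
/-!
This is Chernoff's method. The moment generating function of `Bin(n, p)` is
`(1 + p (exp t - 1)) ^ n ≤ exp (n p (exp t - 1))`, so it is dominated by that of the Poisson
distribution of the same mean `m = n p`. Hence `P[X ≤ k] ≤ exp (-t k + m (exp t - 1))` for all
`t ≤ 0`, and the right-hand side is least at `t = log (k / m)`, which is nonpositive as `k ≤ m`.
-/

open MeasureTheory ProbabilityTheory Real
open scoped unitInterval

theorem measureReal_le_le_of_mgf_le_exp_mul_exp_sub_one {Ω : Type*} [MeasurableSpace Ω]
    {μ : Measure Ω} [IsFiniteMeasure μ] {X : Ω → ℝ} {m k : ℝ}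
    (h_int : ∀ t ≤ 0, Integrable (fun ω ↦ exp (t * X ω)) μ)
    (h_mgf : ∀ t ≤ 0, mgf X μ t ≤ exp (m * (exp t - 1))) (hk : 0 < k) (hkm : k ≤ m) :
    μ.real {ω | X ω ≤ k} ≤ (m / k) ^ k * exp (k - m) := by
  have hm : 0 < m := hk.trans_le hkm
  have ht : log (k / m) ≤ 0 := log_nonpos (by positivity) (div_le_one_of_le₀ hkm hm.le)
  have h_rpow : exp (-log (k / m) * k) = (m / k) ^ k := by
    rw [← log_inv, inv_div, rpow_def_of_pos (by positivity)]
  have h_exponent : m * (exp (log (k / m)) - 1) = k - m := by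
    rw [exp_log (by positivity), mul_sub_one, mul_div_cancel₀ k hm.ne']
  calc μ.real {ω | X ω ≤ k}
      ≤ exp (-log (k / m) * k) * mgf X μ (log (k / m)) :=
        measure_le_le_exp_mul_mgf k ht (h_int _ ht)
    _ ≤ exp (-log (k / m) * k) * exp (m * (exp (log (k / m)) - 1)) := by
        gcongr
        exact h_mgf _ ht
    _ = (m / k) ^ k * exp (k - m) := by rw [h_rpow, h_exponent]

section Binomial

variable (n : ℕ) (p : I)

theorem binomial_real_setOf_eq_sum (P : ℕ → Prop) [DecidablePred P] :
    Bin(n, p).real {j | P j} = ∑ j ∈ Finset.range (n + 1),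
      if P j then (n.choose j : ℝ) * p ^ j * (1 - p) ^ (n - j) else 0 := by
  rw [← integral_indicator_one .of_discrete, integral_binomial, Nat.range_succ_eq_Iic]
  simp [Set.indicator_apply]

theorem mgf_natCast_binomial (t : ℝ) :
    mgf (Nat.cast : ℕ → ℝ) Bin(n, p) t = (1 + p * (exp t - 1)) ^ n := by
  calc mgf (Nat.cast : ℕ → ℝ) Bin(n, p) t
      = ∑ j ∈ Finset.range (n + 1),
          (n.choose j * (p : ℝ) ^ j * (1 - p) ^ (n - j)) • exp (t * j) := by
        rw [mgf, integral_binomial, Nat.range_succ_eq_Iic]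
    _ = (p * exp t + (1 - p)) ^ n := by
        rw [add_pow]
        refine Finset.sum_congr rfl fun j _ ↦ ?_
        rw [mul_comm t, exp_nat_mul, mul_pow, smul_eq_mul]
        ring
    _ = (1 + p * (exp t - 1)) ^ n := by ring

theorem mgf_natCast_binomial_le_exp (t : ℝ) :
    mgf (Nat.cast : ℕ → ℝ) Bin(n, p) t ≤ exp (n * p * (exp t - 1)) := by
  have h_base_nonneg : 0 ≤ 1 + (p : ℝ) * (exp t - 1) := by
    linarith [p.2.2, mul_nonneg p.2.1 (exp_pos t).le]
  calc mgf (Nat.cast : ℕ → ℝ) Bin(n, p) t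
      = (1 + p * (exp t - 1)) ^ n := mgf_natCast_binomial n p t
    _ ≤ exp (p * (exp t - 1)) ^ n := by
        gcongr
        exact (add_comm _ _).trans_le (add_one_le_exp _)
    _ = exp (n * p * (exp t - 1)) := by rw [← exp_nat_mul, mul_assoc]

theorem binomial_real_le_le {k : ℝ} (hk : 0 < k) (hkm : k ≤ n * p) :
    Bin(n, p).real {j | (j : ℝ) ≤ k} ≤ (n * p / k) ^ k * exp (k - n * p) :=
  measureReal_le_le_of_mgf_le_exp_mul_exp_sub_one (fun _ _ ↦ integrable_binomial _)
    (fun t _ ↦ mgf_natCast_binomial_le_exp n p t) hk hkm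

end Binomial

/-- Chernoff-type lower-tail bound for the binomial distribution `Bin(n, p)`:
for real `k` with `0 < k ≤ n p`, `P[X ≤ k] ≤ (np/k)^k exp(k - np)`. -/
theorem stmt_1 (n : ℕ) (p : ℝ) (hp0 : 0 ≤ p) (hp1 : p ≤ 1) (k : ℝ)
    (hk0 : 0 < k) (hknp : k ≤ (n : ℝ) * p) :
    (∑ j ∈ Finset.range (n + 1),
        if (j : ℝ) ≤ k then (n.choose j : ℝ) * p ^ j * (1 - p) ^ (n - j) else 0)
      ≤ ((n : ℝ) * p / k) ^ k * Real.exp (k - (n : ℝ) * p) := by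
  lift p to I using ⟨hp0, hp1⟩
  calc _ = Bin(n, p).real {j | (j : ℝ) ≤ k} := (binomial_real_setOf_eq_sum n p _).symm
    _ ≤ _ := binomial_real_le_le n p hk0 hknp
end

section
/- Let $0 < \alpha < 1$, set $\delta = 1 - \alpha$, and let $(\Omega, \mathcal{F}, P)$ be a probability space carrying, for each $n \geq 2$, a random variable $X_n$ (the degree of a fixed vertex $v$ in the random intersection graph $G(n, m_n, p_n)$ with $p_n = (m_n n^{\alpha})^{-1/2}$) whose distribution is binomial $\mathrm{Bin}(n-1, q_n)$, where $q_n = 1 - (1 - p_n^2)^{m_n}$ and $m_n \geq 1$. Let $c \in (0,1)$ and let $a = a(c) \in (0,1)$ be the root of $a \log a - a + 1 = c$ in $(0,1)$. Then $P[X_n \leq a\, n^{\delta} \text{ for infinitely many } n] = 0$; in particular, almost surely $\limsup_{n \to \infty} X_n / n^{\delta} \geq a$. -/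
open MeasureTheory Filter

open Asymptotics InformationTheory ProbabilityTheory Set
open scoped Topology unitInterval

/-!
For a binomial variable of mean `μ`, exponential tilting by `log a` bounds the tail at `a μ` by
`exp (-klFun a * μ)`, where `klFun a = a log a - a + 1` is positive for `a ≠ 1`. The mean degree is
`(n - 1) qₙ ~ n ^ (1 - α)`, so the probabilities that `Xₙ` deviates from its mean by a fixed
proportion are summable. By Borel–Cantelli, almost surely `Xₙ ~ n ^ (1 - α)`, and both claims are
read off from this equivalence since `a < 1`.
-/

section Chernoff

variable {Ω : Type*} [MeasurableSpace Ω] {P : Measure Ω} {X : Ω → ℝ} {n : ℕ} {p : I}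

theorem mgf_of_hasLaw_binomial (hX : HasLaw X Bin(ℝ, n, p) P) (t : ℝ) :
    mgf X P t = (p * Real.exp t + (1 - p)) ^ n := by
  rw [← mgf_id_map hX.aemeasurable, hX.map_eq, mgf, integral_map_cast_binomial, add_pow,
    ← Nat.range_succ_eq_Iic]
  refine Finset.sum_congr rfl fun k _ => ?_
  rw [id, smul_eq_mul, mul_comm t, Real.exp_nat_mul, mul_pow]
  ring

theorem mgf_le_exp_of_hasLaw_binomial (hX : HasLaw X Bin(ℝ, n, p) P) (t : ℝ) :
    mgf X P t ≤ Real.exp (n * p * (Real.exp t - 1)) := by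
  have hp : 0 ≤ 1 - (p : ℝ) := sub_nonneg.2 p.2.2
  rw [mgf_of_hasLaw_binomial hX, mul_assoc, Real.exp_nat_mul]
  apply pow_le_pow_left₀ (by have := p.2.1; positivity)
  linarith [Real.add_one_le_exp (p * (Real.exp t - 1))]

theorem integrable_exp_mul_of_hasLaw_binomial (hX : HasLaw X Bin(ℝ, n, p) P) (t : ℝ) :
    Integrable (fun ω => Real.exp (t * X ω)) P := by
  have h := integrable_map_cast_binomial (n := n) (p := p) fun x : ℝ => Real.exp (t * x)
  rw [← hX.map_eq] at h
  exact h.comp_aemeasurable hX.aemeasurable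

theorem exp_neg_log_mul_mgf_le_of_hasLaw_binomial (hX : HasLaw X Bin(ℝ, n, p) P) {a : ℝ}
    (ha : 0 < a) :
    Real.exp (-Real.log a * (a * (n * p))) * mgf X P (Real.log a) ≤
      Real.exp (-klFun a * (n * p)) := calc
  _ ≤ Real.exp (-Real.log a * (a * (n * p))) * Real.exp (n * p * (a - 1)) := by
    gcongr
    simpa only [Real.exp_log ha] using mgf_le_exp_of_hasLaw_binomial hX (Real.log a)
  _ = Real.exp (-klFun a * (n * p)) := by
    rw [← Real.exp_add, klFun_apply]
    ring_nf

theorem measureReal_le_mul_mean_le_of_hasLaw_binomial (hX : HasLaw X Bin(ℝ, n, p) P) {a : ℝ}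
    (ha0 : 0 < a) (ha1 : a ≤ 1) :
    P.real {ω | X ω ≤ a * (n * p)} ≤ Real.exp (-klFun a * (n * p)) := by
  have := hX.isProbabilityMeasure
  exact (measure_le_le_exp_mul_mgf _ (Real.log_nonpos ha0.le ha1)
    (integrable_exp_mul_of_hasLaw_binomial hX _)).trans
      (exp_neg_log_mul_mgf_le_of_hasLaw_binomial hX ha0)

theorem measureReal_mul_mean_le_le_of_hasLaw_binomial (hX : HasLaw X Bin(ℝ, n, p) P) {a : ℝ}
    (ha : 1 ≤ a) :
    P.real {ω | a * (n * p) ≤ X ω} ≤ Real.exp (-klFun a * (n * p)) := by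
  have := hX.isProbabilityMeasure
  exact (measure_ge_le_exp_mul_mgf _ (Real.log_nonneg ha)
    (integrable_exp_mul_of_hasLaw_binomial hX _)).trans
      (exp_neg_log_mul_mgf_le_of_hasLaw_binomial hX (one_pos.trans_le ha))

theorem measureReal_mul_mean_lt_abs_sub_le_of_hasLaw_binomial (hX : HasLaw X Bin(ℝ, n, p) P)
    {ε : ℝ} (hε0 : 0 ≤ ε) (hε1 : ε < 1) :
    P.real {ω | ε * (n * p) < |X ω - n * p|} ≤
      Real.exp (-klFun (1 - ε) * (n * p)) + Real.exp (-klFun (1 + ε) * (n * p)) := by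
  have := hX.isProbabilityMeasure
  have hsub : {ω | ε * (n * p) < |X ω - n * p|} ⊆
      {ω | X ω ≤ (1 - ε) * (n * p)} ∪ {ω | (1 + ε) * (n * p) ≤ X ω} := by
    intro ω hω
    rcases lt_abs.1 (mem_ofPred.1 hω) with hupper | hlower
    · exact .inr (mem_ofPred.2 (by linarith))
    · exact .inl (mem_ofPred.2 (by linarith))
  calc P.real {ω | ε * (n * p) < |X ω - n * p|}
      ≤ P.real {ω | X ω ≤ (1 - ε) * (n * p)} + P.real {ω | (1 + ε) * (n * p) ≤ X ω} :=
        (measureReal_mono hsub).trans (measureReal_union_le _ _)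
    _ ≤ _ := add_le_add
        (measureReal_le_mul_mean_le_of_hasLaw_binomial hX (by linarith) (by linarith))
        (measureReal_mul_mean_le_le_of_hasLaw_binomial hX (by linarith))

end Chernoff

theorem ae_eventually_notMem_of_measureReal_le {Ω : Type*} [MeasurableSpace Ω] {P : Measure Ω}
    [IsFiniteMeasure P] {s : ℕ → Set Ω} {f : ℕ → ℝ} (hf : Summable f)
    (hs : ∀ᶠ n in atTop, P.real (s n) ≤ f n) :
    ∀ᵐ ω ∂P, ∀ᶠ n in atTop, ω ∉ s n := by
  have hsum : Summable fun n => P.real (s n) := hf.of_norm_bounded_eventually_nat <| by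
    simpa only [Real.norm_of_nonneg measureReal_nonneg] using hs
  apply ae_eventually_notMem
  simpa only [ofReal_measureReal (measure_ne_top P _)] using hsum.tsum_ofReal_ne_top

theorem ae_isEquivalent_mean_of_hasLaw_binomial {Ω : Type*} [MeasurableSpace Ω] {P : Measure Ω}
    {X : ℕ → Ω → ℝ} {N : ℕ → ℕ} {p : ℕ → I}
    (hX : ∀ᶠ n in atTop, HasLaw (X n) Bin(ℝ, N n, p n) P)
    (hsum : ∀ k > 0, Summable fun n => Real.exp (-k * (N n * p n))) :
    ∀ᵐ ω ∂P, (X · ω) ~[atTop] fun n => (N n * p n : ℝ) := by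
  have := hX.exists.choose_spec.isProbabilityMeasure
  obtain ⟨ε, -, hε, hε_lim⟩ := exists_seq_strictAnti_tendsto' (zero_lt_one' ℝ)
  have hdev (j : ℕ) : ∀ᵐ ω ∂P, ∀ᶠ n in atTop, ¬ ε j * (N n * p n) < |X n ω - N n * p n| := by
    have hrate {a : ℝ} (ha0 : 0 ≤ a) (ha1 : a ≠ 1) : 0 < klFun a :=
      (klFun_nonneg ha0).lt_of_ne' (mt (klFun_eq_zero_iff ha0).1 ha1)
    obtain ⟨hε0, hε1⟩ := hε j
    refine ae_eventually_notMem_of_measureReal_le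
      ((hsum _ (hrate (sub_nonneg.2 hε1.le) (by linarith))).add
        (hsum _ (hrate (a := 1 + ε j) (by linarith) (by linarith)))) (hX.mono fun n hn => ?_)
    exact measureReal_mul_mean_lt_abs_sub_le_of_hasLaw_binomial hn hε0.le hε1
  filter_upwards [ae_all_iff.2 hdev] with ω hω
  refine isLittleO_iff.2 fun c hc => ?_
  obtain ⟨j, hj⟩ := (hε_lim.eventually_le_const hc).exists
  filter_upwards [hω j] with n hn
  have hmean : 0 ≤ (N n * p n : ℝ) := mul_nonneg (N n).cast_nonneg (p n).2.1
  rw [Real.norm_of_nonneg hmean, Pi.sub_apply, Real.norm_eq_abs]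
  exact (not_lt.1 hn).trans (by gcongr)

theorem eventually_mul_lt_of_isEquivalent {ι : Type*} {l : Filter ι} {u v : ι → ℝ}
    (h : u ~[l] v) (hv : ∀ᶠ x in l, 0 < v x) {a : ℝ} (ha : a < 1) : ∀ᶠ x in l, a * v x < u x := by
  obtain ⟨φ, hφ, huφ⟩ := h.exists_eq_mul
  filter_upwards [hφ.eventually_const_lt ha, huφ, hv] with x hx hux hvx
  rw [hux]
  exact mul_lt_mul_of_pos_right hx hvx

theorem eventually_natCast_rpow_pos (s : ℝ) : ∀ᶠ n : ℕ in atTop, 0 < (n : ℝ) ^ s := by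
  filter_upwards [eventually_gt_atTop 0] with n hn
  positivity

theorem summable_exp_neg_mul_natCast_rpow {k s : ℝ} (hk : 0 < k) (hs : 0 < s) :
    Summable fun n : ℕ => Real.exp (-k * (n : ℝ) ^ s) := by
  have hrpow : Tendsto (fun n : ℕ => (n : ℝ) ^ s) atTop atTop :=
    (tendsto_rpow_atTop hs).comp tendsto_natCast_atTop_atTop
  refine summable_of_isBigO_nat (Real.summable_nat_rpow.2 (by norm_num : (-2 : ℝ) < -1)) ?_
  refine ((isLittleO_exp_neg_mul_rpow_atTop hk (-2 / s)).isBigO.comp_tendsto hrpow).congr_right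
    fun n => ?_
  rw [Function.comp_apply, ← Real.rpow_mul n.cast_nonneg, mul_div_cancel₀ _ hs.ne']

theorem summable_exp_neg_mul_of_isEquivalent_rpow {u : ℕ → ℝ} {k s : ℝ}
    (hu : u ~[atTop] fun n => (n : ℝ) ^ s) (hk : 0 < k) (hs : 0 < s) :
    Summable fun n => Real.exp (-k * u n) := by
  refine (summable_exp_neg_mul_natCast_rpow (half_pos hk) hs).of_norm_bounded_eventually_nat ?_
  filter_upwards [eventually_mul_lt_of_isEquivalent hu (eventually_natCast_rpow_pos s)
    one_half_lt_one] with n hn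
  rw [Real.norm_of_nonneg (Real.exp_nonneg _), Real.exp_le_exp]
  linarith [mul_lt_mul_of_pos_left hn hk]

theorem one_sub_one_sub_pow_mem_unitInterval {x : ℝ} (hx : x ∈ I) (m : ℕ) :
    1 - (1 - x) ^ m ∈ I := by
  have h := Icc.one_sub_mem hx
  exact Icc.one_sub_mem ⟨pow_nonneg h.1 m, pow_le_one₀ h.1 h.2⟩

theorem abs_one_sub_one_sub_pow_sub_le {x : ℝ} (hx : x ∈ I) (m : ℕ) :
    |1 - (1 - x) ^ m - m * x| ≤ (m * x) ^ 2 := by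
  set y : ℝ := m * x
  have hy : 0 ≤ y := mul_nonneg m.cast_nonneg hx.1
  have hlower : 1 - y ≤ (1 - x) ^ m := by
    simpa only [← sub_eq_add_neg, mul_neg] using
      one_add_mul_le_pow (a := -x) (by linarith [hx.2]) m
  have hpow : (1 - x) ^ m * (1 + y) ≤ 1 := calc
    (1 - x) ^ m * (1 + y) ≤ (1 - x) ^ m * (1 + x) ^ m := by
      gcongr
      · exact pow_nonneg (by linarith [hx.2]) m
      · exact one_add_mul_le_pow (by linarith [hx.1]) m
    _ = (1 - x ^ 2) ^ m := by rw [← mul_pow]; ring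
    _ ≤ 1 := pow_le_one₀ (by nlinarith [hx.1, hx.2]) (by nlinarith)
  have hupper : (1 - x) ^ m ≤ 1 - y + y ^ 2 := by
    refine le_of_mul_le_mul_right (hpow.trans ?_) (by linarith : 0 < 1 + y)
    linarith [pow_nonneg hy 3, show (1 - y + y ^ 2) * (1 + y) = 1 + y ^ 3 by ring]
  exact abs_le.2 ⟨by linarith, by linarith [sq_nonneg y]⟩

theorem isEquivalent_one_sub_one_sub_pow {ι : Type*} {l : Filter ι} {x : ι → ℝ} {m : ι → ℕ}
    (hx : ∀ᶠ i in l, x i ∈ I) (hmx : Tendsto (fun i => m i * x i) l (𝓝 0)) :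
    (fun i => 1 - (1 - x i) ^ m i) ~[l] fun i => m i * x i := by
  have hsq : (fun i => (m i * x i) ^ 2) =o[l] fun i => m i * x i := by
    simpa only [Function.comp_def, pow_one] using
      (isLittleO_pow_pow (𝕜 := ℝ) one_lt_two).comp_tendsto hmx
  refine (IsBigO.of_norm_eventuallyLE (hx.mono fun i hi => ?_)).trans_isLittleO hsq
  exact abs_one_sub_one_sub_pow_sub_le hi (m i)

theorem isEquivalent_natCast_sub_one :
    (fun n : ℕ => ((n - 1 : ℕ) : ℝ)) ~[atTop] fun n => (n : ℝ) := by
  have hnorm : Tendsto (norm ∘ fun n : ℕ => (n : ℝ)) atTop atTop :=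
    tendsto_norm_atTop_atTop.comp tendsto_natCast_atTop_atTop
  refine (IsEquivalent.refl.add_const_of_norm_tendsto_atTop (c := -1) hnorm).congr_left ?_
  filter_upwards [eventually_ge_atTop 1] with n hn
  rw [Nat.cast_pred hn, sub_eq_add_neg]

theorem isEquivalent_natCast_sub_one_mul_of_isEquivalent_rpow_neg {q : ℕ → ℝ} {α : ℝ}
    (hq : q ~[atTop] fun n => (n : ℝ) ^ (-α)) :
    (fun n => ((n - 1 : ℕ) : ℝ) * q n) ~[atTop] fun n => (n : ℝ) ^ (1 - α) := by
  refine (isEquivalent_natCast_sub_one.mul hq).congr_right ?_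
  filter_upwards [eventually_gt_atTop 0] with n hn
  rw [Pi.mul_apply, sub_eq_add_neg, Real.rpow_add (by positivity), Real.rpow_one]

theorem rpow_neg_one_half_sq {x : ℝ} (hx : 0 ≤ x) : (x ^ (-(1 / 2) : ℝ)) ^ 2 = x⁻¹ := by
  rw [← Real.rpow_mul_natCast hx, ← Real.rpow_neg_one]
  norm_num

theorem inv_natCast_mul_natCast_rpow_mem_unitInterval {α : ℝ} (hα : 0 ≤ α) (m n : ℕ) :
    ((m : ℝ) * (n : ℝ) ^ α)⁻¹ ∈ I := by
  rw [mul_inv, ← Real.inv_rpow n.cast_nonneg]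
  exact unitInterval.mul_mem ⟨by positivity, Nat.cast_inv_le_one m⟩
    ⟨by positivity, Real.rpow_le_one (by positivity) (Nat.cast_inv_le_one n) hα⟩

theorem isEquivalent_edge_probability_rpow_neg {α : ℝ} (hα : 0 < α) {m : ℕ → ℕ}
    (hm : ∀ n, 1 ≤ m n) :
    (fun n : ℕ => 1 - (1 - ((m n : ℝ) * (n : ℝ) ^ α)⁻¹) ^ m n) ~[atTop]
      fun n => (n : ℝ) ^ (-α) := by
  have hmul (n : ℕ) : m n * ((m n : ℝ) * (n : ℝ) ^ α)⁻¹ = (n : ℝ) ^ (-α) := by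
    have : (m n : ℝ) ≠ 0 := mod_cast Nat.one_le_iff_ne_zero.1 (hm n)
    rw [mul_inv, mul_inv_cancel_left₀ this, Real.rpow_neg n.cast_nonneg]
  have hlim : Tendsto (fun n : ℕ => (n : ℝ) ^ (-α)) atTop (𝓝 0) :=
    (tendsto_rpow_neg_atTop hα).comp tendsto_natCast_atTop_atTop
  simp only [← hmul] at hlim ⊢
  exact isEquivalent_one_sub_one_sub_pow
    (.of_forall fun n => inv_natCast_mul_natCast_rpow_mem_unitInterval hα.le (m n) n) hlim

theorem hasLaw_binomial_of_measure_eq {Ω : Type*} [MeasurableSpace Ω] {P : Measure Ω} {X : Ω → ℕ}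
    {n : ℕ} {p : I} (hX : AEMeasurable X P)
    (h : ∀ j, P {ω | X ω = j} =
      ENNReal.ofReal ((n.choose j : ℝ) * (p : ℝ) ^ j * (1 - p) ^ (n - j))) :
    HasLaw (fun ω => (X ω : ℝ)) Bin(ℝ, n, p) P := by
  have hlaw : HasLaw X Bin(n, p) P := by
    refine ⟨hX, Measure.ext_of_singleton fun j => ?_⟩
    rw [Measure.map_apply_of_aemeasurable hX (measurableSet_singleton j), binomial_singleton]
    exact h j
  exact HasLaw.fun_comp ⟨AEMeasurable.of_discrete, rfl⟩ hlaw

theorem measure_limsup_setOf_le_mul_eq_zero_of_ae_isEquivalent {Ω : Type*} [MeasurableSpace Ω]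
    {P : Measure Ω} {X : ℕ → Ω → ℝ} {v : ℕ → ℝ} (h : ∀ᵐ ω ∂P, (X · ω) ~[atTop] v)
    (hv : ∀ᶠ n in atTop, 0 < v n) {a : ℝ} (ha : a < 1) :
    P (limsup (fun n => {ω | X n ω ≤ a * v n}) atTop) = 0 := by
  rw [measure_eq_zero_iff_ae_notMem]
  filter_upwards [h] with ω hω
  rw [mem_limsup_iff_frequently_mem, not_frequently]
  exact (eventually_mul_lt_of_isEquivalent hω hv ha).mono fun n hn => not_le.2 hn

theorem stmt_15_general {Ω : Type*} [MeasurableSpace Ω] {P : Measure Ω} {X : ℕ → Ω → ℝ} {q : ℕ → I}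
    {α : ℝ} (hα : α < 1) (hq : (fun n => (q n : ℝ)) ~[atTop] fun n => (n : ℝ) ^ (-α))
    (hX : ∀ᶠ n in atTop, HasLaw (X n) Bin(ℝ, n - 1, q n) P) {a : ℝ} (ha : a < 1) :
    P (limsup (fun n : ℕ => {ω | X n ω ≤ a * (n : ℝ) ^ (1 - α)}) atTop) = 0 ∧
      ∀ᵐ ω ∂P, a ≤ limsup (fun n : ℕ => X n ω / (n : ℝ) ^ (1 - α)) atTop := by
  have hmean := isEquivalent_natCast_sub_one_mul_of_isEquivalent_rpow_neg hq
  have hpos := eventually_natCast_rpow_pos (1 - α)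
  have hXequiv : ∀ᵐ ω ∂P, (X · ω) ~[atTop] fun n => (n : ℝ) ^ (1 - α) :=
    (ae_isEquivalent_mean_of_hasLaw_binomial hX fun _ hk =>
      summable_exp_neg_mul_of_isEquivalent_rpow hmean hk (sub_pos.2 hα)).mono
        fun _ hω => hω.trans hmean
  refine ⟨measure_limsup_setOf_le_mul_eq_zero_of_ae_isEquivalent hXequiv hpos ha, ?_⟩
  filter_upwards [hXequiv] with ω hω
  have hlim := (isEquivalent_iff_tendsto_one (hpos.mono fun _ => ne_of_gt)).1 hω
  exact ha.le.trans_eq hlim.limsup_eq.symm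

/-- Let `0 < α < 1`, `δ = 1 - α`, and for each `n ≥ 2` let `X n` be the degree of a
fixed vertex of the random intersection graph `G(n, mₙ, pₙ)` with
`pₙ = (mₙ n^α)^{-1/2}`, i.e. a `Bin(n-1, qₙ)`-distributed random variable with
`qₙ = 1 - (1 - pₙ²)^{mₙ}`.  If `c ∈ (0,1)` and `a = a(c) ∈ (0,1)` is the root of
`a log a - a + 1 = c`, then `P[Xₙ ≤ a n^δ i.o.] = 0`; in particular, almost surely
`limsupₙ Xₙ / n^δ ≥ a`. -/
theorem stmt_15 (α δ : ℝ) (hα0 : 0 < α) (hα1 : α < 1) (hδ : δ = 1 - α)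
    (Ω : Type) [MeasurableSpace Ω] (P : Measure Ω) [IsProbabilityMeasure P]
    (m : ℕ → ℕ) (hm : ∀ n, 1 ≤ m n)
    (p q : ℕ → ℝ)
    (hp : ∀ n, p n = ((m n : ℝ) * (n : ℝ) ^ α) ^ (-(1 / 2) : ℝ))
    (hq : ∀ n, q n = 1 - (1 - p n ^ 2) ^ m n)
    (X : ℕ → Ω → ℕ) (hX : ∀ n, Measurable (X n))
    (hdist : ∀ n, 2 ≤ n → ∀ j : ℕ,
      P {ω | X n ω = j} =
        ENNReal.ofReal (((n - 1).choose j : ℝ) * q n ^ j * (1 - q n) ^ (n - 1 - j)))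
    (c a : ℝ) (hc0 : 0 < c) (hc1 : c < 1) (ha0 : 0 < a) (ha1 : a < 1)
    (hac : a * Real.log a - a + 1 = c) :
    P (limsup (fun n : ℕ => {ω | (X n ω : ℝ) ≤ a * (n : ℝ) ^ δ}) atTop) = 0 ∧
      ∀ᵐ ω ∂P, a ≤ limsup (fun n : ℕ => (X n ω : ℝ) / (n : ℝ) ^ δ) atTop := by
  simp only [hp, rpow_neg_one_half_sq (mul_nonneg (m _).cast_nonneg
    (Real.rpow_nonneg (Nat.cast_nonneg _) α))] at hq
  lift q to ℕ → I using fun n => hq n ▸ one_sub_one_sub_pow_mem_unitInterval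
    (inv_natCast_mul_natCast_rpow_mem_unitInterval hα0.le (m n) n) (m n)
  have hequiv : (fun n => (q n : ℝ)) ~[atTop] fun n => (n : ℝ) ^ (-α) := by
    simpa only [hq] using isEquivalent_edge_probability_rpow_neg hα0 hm
  exact hδ ▸ stmt_15_general hα1 hequiv ((eventually_ge_atTop 2).mono fun n hn =>
    hasLaw_binomial_of_measure_eq (hX n).aemeasurable (hdist n hn)) ha1
end
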